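/- If (μ_n)_{n≥0} is a sequence of Borel probability measures on K satisfying G*(μ_{n+1}) = μ_n for every n ≥ 0, then μ_n = μ_H for every n, where μ_H is the Hutchinson measure. -/

import Mathlib

/-!
Let `T f = (1/N) Σⱼ f ∘ γⱼ` be the averaging operator on continuous functions, so that
`∫ f d(G*μ) = ∫ T f dμ`. Since the `γⱼ` contract distances by `c`, a modulus of continuity of `f`
at scale `c * r` is one of `T f` at scale `r`; hence `Tⁿ f` oscillates little over the whole of `K`
once `f` oscillates little at scale `cⁿ * diam K`. For a sequence with `G*(μ (n+1)) = μ n` one has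
`∫ f dμ₀ = ∫ Tⁿ f dμₙ`, and an almost constant function has almost the same integral against every
probability measure, so any two such sequences agree at the index `0`
(`abs_integral_sub_le_of_inverse_sequence`). The theorem compares each tail of `μ` with the
constant sequence `μH`.
-/

open MeasureTheory
open scoped BigOperators ENNReal

/-- The dual map `G*(μ) = (1/N)·Σⱼ (γⱼ)_*μ` on Borel measures. -/
noncomputable def Gstar {K : Type*} [MeasurableSpace K] {N : ℕ} (γ : Fin N → K → K)
    (μ : Measure K) : Measure K :=
  (N : ℝ≥0∞)⁻¹ • ∑ j : Fin N, Measure.map (γ j) μ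

/-- The averaging operator `T f = (1/N) Σⱼ f ∘ γⱼ`, predual to `Gstar`. -/
noncomputable def avgOp {K : Type*} {N : ℕ} (γ : Fin N → K → K) (f : K → ℝ) : K → ℝ :=
  fun x => (N : ℝ)⁻¹ * ∑ j : Fin N, f (γ j x)

lemma continuous_avgOp {K : Type*} [TopologicalSpace K] {N : ℕ} {γ : Fin N → K → K}
    (hγ : ∀ j, Continuous (γ j)) {f : K → ℝ} (hf : Continuous f) : Continuous (avgOp γ f) :=
  continuous_const.mul (continuous_finsetSum _ fun j _ => hf.comp (hγ j))

lemma integrable_of_continuous_of_compact {K : Type*} [TopologicalSpace K] [CompactSpace K]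
    [MeasurableSpace K] [BorelSpace K] {f : K → ℝ} (hf : Continuous f)
    (μ : Measure K) [IsFiniteMeasure μ] : Integrable f μ :=
  BoundedContinuousFunction.integrable μ (BoundedContinuousFunction.mkOfCompact ⟨f, hf⟩)

lemma integral_Gstar {K : Type*} [MetricSpace K] [CompactSpace K] [MeasurableSpace K]
    [BorelSpace K] {N : ℕ} {γ : Fin N → K → K} (hγ : ∀ j, Continuous (γ j))
    {f : K → ℝ} (hf : Continuous f) (μ : Measure K) [IsProbabilityMeasure μ] :
    ∫ x, f x ∂(Gstar γ μ) = ∫ x, avgOp γ f x ∂μ := by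
  have hfin : ∀ j, IsProbabilityMeasure (Measure.map (γ j) μ) := fun j =>
    Measure.isProbabilityMeasure_map (hγ j).measurable.aemeasurable
  unfold Gstar avgOp
  rw [integral_smul_measure, integral_finsetSum_measure, integral_const_mul, integral_finsetSum]
  · simp only [ENNReal.toReal_inv, ENNReal.toReal_natCast, smul_eq_mul]
    congr 1
    refine Finset.sum_congr rfl fun j _ => ?_
    exact integral_map (hγ j).measurable.aemeasurable hf.aestronglyMeasurable
  · exact fun j _ => integrable_of_continuous_of_compact (hf.comp (hγ j)) μ
  · exact fun j _ => integrable_of_continuous_of_compact hf _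

lemma abs_avgOp_sub_le {K : Type*} [MetricSpace K] {N : ℕ} (hN : 0 < N) {γ : Fin N → K → K}
    {c r ε : ℝ} (hc : 0 ≤ c) (hγ : ∀ j x y, dist (γ j x) (γ j y) ≤ c * dist x y) {f : K → ℝ}
    (hf : ∀ x y, dist x y ≤ c * r → |f x - f y| ≤ ε) (x y : K) (hxy : dist x y ≤ r) :
    |avgOp γ f x - avgOp γ f y| ≤ ε := by
  have hN' : (0 : ℝ) < N := by exact_mod_cast hN
  have hsum : |∑ j : Fin N, (f (γ j x) - f (γ j y))| ≤ N * ε := by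
    refine (Finset.abs_sum_le_sum_abs _ _).trans ?_
    refine (Finset.sum_le_card_nsmul _ _ ε fun j _ => hf _ _ ?_).trans (by simp)
    exact (hγ j x y).trans (mul_le_mul_of_nonneg_left hxy hc)
  unfold avgOp
  rw [← mul_sub, ← Finset.sum_sub_distrib, abs_mul, abs_of_pos (inv_pos.2 hN'),
    inv_mul_le_iff₀ hN']
  exact hsum

/-- Two sequences of probability measures that are inverse orbits of `Gstar` give close integrals
at the index `0` to every function of small oscillation at the scale `c ^ n * D`, where `D` bounds
the diameter. The sequences vary in the induction on `n`, which shifts them by one. -/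
lemma abs_integral_sub_le_of_inverse_sequence {K : Type*} [MetricSpace K] [CompactSpace K]
    [MeasurableSpace K] [BorelSpace K] {N : ℕ} (hN : 0 < N) {γ : Fin N → K → K} {c D ε : ℝ}
    (hc : 0 ≤ c) (hcont : ∀ j, Continuous (γ j))
    (hγ : ∀ j x y, dist (γ j x) (γ j y) ≤ c * dist x y) (hD : ∀ x y : K, dist x y ≤ D) (n : ℕ) :
    ∀ (f : K → ℝ), Continuous f → (∀ x y, dist x y ≤ c ^ n * D → |f x - f y| ≤ ε) →
    ∀ (μ ν : ℕ → Measure K), (∀ n, IsProbabilityMeasure (μ n)) →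
      (∀ n, IsProbabilityMeasure (ν n)) → (∀ n, Gstar γ (μ (n + 1)) = μ n) →
      (∀ n, Gstar γ (ν (n + 1)) = ν n) →
      |∫ x, f x ∂(μ 0) - ∫ x, f x ∂(ν 0)| ≤ 2 * ε := by
  induction n with
  | zero =>
    intro f hf hosc μ ν hμ hν _ _
    obtain ⟨x₀⟩ : Nonempty K := nonempty_of_isProbabilityMeasure (μ 0)
    have key : ∀ (ρ : Measure K) [IsProbabilityMeasure ρ], |∫ x, f x ∂ρ - f x₀| ≤ ε := by
      intro ρ _
      have h := norm_integral_le_of_norm_le_const (μ := ρ) (f := fun x => f x - f x₀) (C := ε)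
        (Filter.Eventually.of_forall fun x => hosc x x₀ (by simpa using hD x x₀))
      rw [integral_sub (integrable_of_continuous_of_compact hf ρ) (integrable_const _)] at h
      simpa using h
    have h1 := abs_le.1 (key (μ 0))
    have h2 := abs_le.1 (key (ν 0))
    exact abs_le.2 ⟨by linarith, by linarith⟩
  | succ n ih =>
    intro f hf hosc μ ν hμ hν hμr hνr
    rw [← hμr 0, ← hνr 0, integral_Gstar hcont hf, integral_Gstar hcont hf]
    refine ih (avgOp γ f) (continuous_avgOp hcont hf) ?_ (fun k => μ (k + 1))
      (fun k => ν (k + 1)) (fun _ => hμ _) (fun _ => hν _) (fun _ => hμr _) (fun _ => hνr _)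
    refine abs_avgOp_sub_le hN hc hγ fun x y hxy => hosc x y ?_
    rwa [pow_succ', mul_assoc]

/-- If `(μₙ)` is a sequence of Borel probability measures on `K` satisfying
`G*(μ_{n+1}) = μₙ` for every `n ≥ 0`, then `μₙ = μ_H` for every `n`, where `μ_H` is the
Hutchinson measure (the unique `G*`-fixed Borel probability measure). -/
theorem inverse_limit_eq_hutchinson
    {K : Type*} [MetricSpace K] [CompactSpace K]
    [MeasurableSpace K] [BorelSpace K]
    (N : ℕ) (hN : 2 ≤ N)
    (γ : Fin N → K → K)
    (c c' : ℝ) (hc'pos : 0 < c') (hc'c : c' ≤ c) (hc1 : c < 1)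
    (hcontr : ∀ (i : Fin N) (x y : K),
      c' * dist x y ≤ dist (γ i x) (γ i y) ∧ dist (γ i x) (γ i y) ≤ c * dist x y)
    (hss : ∀ x : K, ∃ (i : Fin N) (y : K), γ i y = x)
    (μH : Measure K) (hμHprob : IsProbabilityMeasure μH)
    (hμHfix : Gstar γ μH = μH)
    (hμHuniq : ∀ ν : Measure K, IsProbabilityMeasure ν → Gstar γ ν = ν → ν = μH)
    (μ : ℕ → Measure K) (hprob : ∀ n, IsProbabilityMeasure (μ n))
    (hrec : ∀ n : ℕ, Gstar γ (μ (n + 1)) = μ n) :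
    ∀ n : ℕ, μ n = μH := by
  intro n
  have hc : 0 ≤ c := hc'pos.le.trans hc'c
  have hγ : ∀ j x y, dist (γ j x) (γ j y) ≤ c * dist x y := fun j x y => (hcontr j x y).2
  have hcont : ∀ j, Continuous (γ j) := fun j =>
    (LipschitzWith.of_dist_le_mul (K := ⟨c, hc⟩) (hγ j)).continuous
  have := hprob n
  refine ext_of_forall_integral_eq_of_IsFiniteMeasure fun f => ?_
  refine eq_of_abs_sub_le_all fun ε hε => ?_
  obtain ⟨δ, hδ, hfδ⟩ := Metric.uniformContinuous_iff.1
    (CompactSpace.uniformContinuous_of_continuous f.continuous) (ε / 2) (half_pos hε)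
  have hlim : Filter.Tendsto (fun m : ℕ => c ^ m * Metric.diam (Set.univ : Set K))
      Filter.atTop (nhds 0) := by
    simpa using (tendsto_pow_atTop_nhds_zero_of_lt_one hc hc1).mul_const _
  obtain ⟨m, hm⟩ := (hlim.eventually_lt_const hδ).exists
  have h := abs_integral_sub_le_of_inverse_sequence (by omega : 0 < N) hc hcont hγ
    (fun x y => Metric.dist_le_diam_of_mem isCompact_univ.isBounded
      (Set.mem_univ x) (Set.mem_univ y)) m f f.continuous (ε := ε / 2)
    (fun x y hxy => (hfδ (hxy.trans_lt hm)).le) (fun k => μ (n + k)) (fun _ => μH)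
    (fun _ => hprob _) (fun _ => hμHprob) (fun k => hrec (n + k)) (fun _ => hμHfix)
  simpa using h.trans_eq (by ring)
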